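/- arXiv:2411.13166 — 3 statements merged into one kernel-verified Lean document; each statement's English description precedes it below -/
import Mathlib

section
/- For every natural number n and every real θ > 0, ∫_{−1}^{1} P_n(x) e^{−iθx} dx = 2 (−i)^n j_n(θ), where P_n is the Legendre polynomial and j_n is the spherical Bessel function of the first kind given by Rayleigh's formula. -/
open MeasureTheory

/-- The Legendre polynomial `P n`, defined by Rodrigues' formula
`P_n(x) = (1/(2^n n!)) (d/dx)^n ((x² − 1)^n)`. -/
noncomputable def legendre (n : ℕ) (x : ℝ) : ℝ :=
  (1 / ((2 : ℝ) ^ n * n.factorial)) * iteratedDeriv n (fun y : ℝ => (y ^ 2 - 1) ^ n) x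

/-- The spherical Bessel function of the first kind, defined by Rayleigh's formula
`j_n(θ) = (−θ)^n ((1/θ) d/dθ)^n (sin θ / θ)`. -/
noncomputable def sphericalBessel (n : ℕ) (θ : ℝ) : ℝ :=
  (-θ) ^ n * ((fun f : ℝ → ℝ => fun t : ℝ => deriv f t / t)^[n]
    (fun t : ℝ => Real.sin t / t)) θ

section Auxiliary

open Polynomial

/-- Integration by parts against `e^{-itx}` on `[-1, 1]` for a polynomial vanishing at `±1`. -/
lemma integral_derivative_eval_mul_exp (q : ℝ[X]) (h₁ : q.eval 1 = 0) (h₂ : q.eval (-1) = 0)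
    (t : ℝ) :
    ∫ x in (-1 : ℝ)..1, (((derivative q).eval x : ℝ) : ℂ) * Complex.exp (-Complex.I * t * x)
      = Complex.I * t *
        ∫ x in (-1 : ℝ)..1, ((q.eval x : ℝ) : ℂ) * Complex.exp (-Complex.I * t * x) := by
  have hv (x : ℝ) : HasDerivAt (fun y : ℝ => Complex.exp (-Complex.I * t * y))
      (Complex.exp (-Complex.I * t * x) * (-Complex.I * t)) x := by
    simpa using ((hasDerivAt_id (x : ℂ)).const_mul (-Complex.I * t)).cexp.comp_ofReal
  have h := intervalIntegral.integral_deriv_mul_eq_sub (a := -1) (b := 1)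
    (fun x _ => (q.hasDerivAt x).ofReal_comp) (fun x _ => hv x)
    (Continuous.intervalIntegrable (by fun_prop) _ _)
    (Continuous.intervalIntegrable (by fun_prop) _ _)
  rw [← intervalIntegral.integral_const_mul, ← sub_eq_zero, ← intervalIntegral.integral_sub
    (Continuous.intervalIntegrable (by fun_prop) _ _)
    (Continuous.intervalIntegrable (by fun_prop) _ _)]
  simp only [h₁, h₂, Complex.ofReal_zero, zero_mul, sub_zero] at h
  rw [← h]
  congr 1
  ext x
  ring

/-- The integral `∫_{-1}^{1} (x² - 1)^n e^{-itx} dx`, a multiple of Poisson's integral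
for `j_n(t) / t^n`. -/
noncomputable def poissonIntegral (n : ℕ) (t : ℝ) : ℂ :=
  ∫ x in (-1 : ℝ)..1, ((((X ^ 2 - 1) ^ n : ℝ[X]).eval x : ℝ) : ℂ) * Complex.exp (-Complex.I * t * x)

lemma integral_iterate_derivative_mul_exp (n k : ℕ) (hk : k ≤ n) (t : ℝ) :
    ∫ x in (-1 : ℝ)..1, (((derivative^[k] ((X ^ 2 - 1) ^ n : ℝ[X])).eval x : ℝ) : ℂ)
        * Complex.exp (-Complex.I * t * x)
      = (Complex.I * t) ^ k * poissonIntegral n t := by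
  induction k with
  | zero => simp [poissonIntegral]
  | succ k ih =>
    have hdvd : (X ^ 2 - 1 : ℝ[X]) ∣ derivative^[k] ((X ^ 2 - 1) ^ n : ℝ[X]) :=
      (dvd_pow_self _ (by lia)).trans (pow_sub_dvd_iterate_derivative_pow _ n k)
    have hroot (x : ℝ) (hx : x ^ 2 = 1) :
        (derivative^[k] ((X ^ 2 - 1) ^ n : ℝ[X])).eval x = 0 :=
      eval_eq_zero_of_dvd_of_eval_eq_zero hdvd (by simp [hx])
    rw [Function.iterate_succ_apply', integral_derivative_eval_mul_exp _
      (hroot 1 (by norm_num)) (hroot (-1) (by norm_num)), ih (by lia)]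
    ring

lemma legendre_eq_eval (n : ℕ) (x : ℝ) :
    legendre n x = (1 / ((2 : ℝ) ^ n * n.factorial)) *
      (derivative^[n] ((X ^ 2 - 1) ^ n : ℝ[X])).eval x := by
  have h : (fun y : ℝ => (y ^ 2 - 1) ^ n) = fun y => ((X ^ 2 - 1) ^ n : ℝ[X]).eval y := by
    ext y; simp
  have hiter (p : ℝ[X]) (k : ℕ) :
      iteratedDeriv k (fun y => p.eval y) = fun y => (derivative^[k] p).eval y := by
    induction k with
    | zero => simp
    | succ k ih =>
      rw [iteratedDeriv_succ, ih]
      ext y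
      rw [Polynomial.deriv, Function.iterate_succ_apply']
  rw [legendre, h, hiter]

lemma hasDerivAt_poissonIntegral (n : ℕ) (t : ℝ) :
    HasDerivAt (poissonIntegral n) (t / (2 * (n + 1)) * poissonIntegral (n + 1) t) t := by
  have hderiv (s x : ℝ) : HasDerivAt
      (fun r : ℝ => ((((X ^ 2 - 1) ^ n : ℝ[X]).eval x : ℝ) : ℂ) * Complex.exp (-Complex.I * r * x))
      (((((X ^ 2 - 1) ^ n : ℝ[X]).eval x : ℝ) : ℂ) *
        (Complex.exp (-Complex.I * s * x) * (-Complex.I * x))) s := by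
    simpa [-eval_pow] using ((((hasDerivAt_id (s : ℂ)).const_mul (-Complex.I)).mul_const
      (x : ℂ)).cexp.comp_ofReal).const_mul ((((X ^ 2 - 1) ^ n : ℝ[X]).eval x : ℝ) : ℂ)
  have h := (intervalIntegral.hasDerivAt_integral_of_dominated_loc_of_deriv_le
    (μ := volume) (a := -1) (b := 1) (x₀ := t) (s := Set.univ)
    (bound := fun x => ‖((X ^ 2 - 1) ^ n : ℝ[X]).eval x‖ * ‖x‖) Filter.univ_mem
    (.of_forall fun s => Continuous.aestronglyMeasurable (by fun_prop))
    (Continuous.intervalIntegrable (by fun_prop) _ _)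
    (Continuous.aestronglyMeasurable (by fun_prop))
    (.of_forall fun x _ s _ => ?_)
    (Continuous.intervalIntegrable (by fun_prop) _ _)
    (.of_forall fun x _ s _ => hderiv s x)).2
  · have hparts := integral_derivative_eval_mul_exp ((X ^ 2 - 1) ^ (n + 1) : ℝ[X])
      (by simp) (by simp) t
    refine h.congr_deriv (Eq.symm ?_)
    have hn : (2 * (n + 1) : ℂ) ≠ 0 := by exact_mod_cast (by lia : 2 * (n + 1) ≠ 0)
    calc (t / (2 * (n + 1)) * poissonIntegral (n + 1) t : ℂ)
        = -Complex.I / (2 * (n + 1)) * (Complex.I * t * poissonIntegral (n + 1) t) := by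
          linear_combination (t * poissonIntegral (n + 1) t / (2 * (n + 1))) * Complex.I_mul_I
      _ = _ := by
          rw [poissonIntegral, ← hparts, ← intervalIntegral.integral_const_mul]
          congr 1
          ext x
          simp [derivative_pow]
          field_simp
  · have hexp : ‖Complex.exp (-Complex.I * s * x)‖ = 1 := by
      simp [Complex.norm_exp]
    rw [norm_mul, norm_mul, hexp]
    simp [-eval_pow]

lemma poissonIntegral_zero {t : ℝ} (ht : t ≠ 0) :
    poissonIntegral 0 t = 2 * ((Real.sin t / t : ℝ) : ℂ) := by
  have ht' : (t : ℂ) ≠ 0 := by exact_mod_cast ht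
  have h := integral_exp_mul_complex (a := -1) (b := 1) (c := -Complex.I * t) (by simp [ht])
  simp only [poissonIntegral, pow_zero, eval_one, Complex.ofReal_one, one_mul, h]
  push_cast
  rw [Complex.sin]
  field_simp
  ring_nf
  simp

lemma iterate_deriv_div_sin_div (n : ℕ) {t : ℝ} (ht : t ≠ 0) :
    (((fun f : ℝ → ℝ => fun t : ℝ => deriv f t / t)^[n] (fun t : ℝ => Real.sin t / t)) t : ℂ)
      = 1 / (2 ^ (n + 1) * n.factorial) * poissonIntegral n t := by
  induction n generalizing t with
  | zero => simp [poissonIntegral_zero ht]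
  | succ n ih =>
    have ht' : (t : ℂ) ≠ 0 := by exact_mod_cast ht
    rw [Function.iterate_succ_apply']
    set f := (fun f : ℝ → ℝ => fun t : ℝ => deriv f t / t)^[n] (fun t : ℝ => Real.sin t / t)
    have hcplx : HasDerivAt (fun s => (f s : ℂ)) _ t :=
      ((hasDerivAt_poissonIntegral n t).const_mul (1 / (2 ^ (n + 1) * n.factorial : ℂ))
        ).congr_of_eventuallyEq ((eventually_ne_nhds ht).mono fun s hs => ih hs)
    have hre : HasDerivAt f _ t := Complex.reCLM.hasFDerivAt.comp_hasDerivAt t hcplx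
    have hn : (n + 1 : ℂ) ≠ 0 := by exact_mod_cast n.succ_ne_zero
    have hfac : (n.factorial : ℂ) ≠ 0 := by exact_mod_cast n.factorial_ne_zero
    rw [Complex.ofReal_div, hre.deriv, hre.ofReal_comp.unique hcplx, Nat.factorial_succ]
    push_cast
    field_simp
    ring

end Auxiliary

/-- For every `n` and every `θ > 0`,
`∫_{−1}^{1} P_n(x) e^{−iθx} dx = 2 (−i)^n j_n(θ)`. -/
theorem legendre_fourier_sphericalBessel (n : ℕ) (θ : ℝ) (hθ : 0 < θ) :
    (∫ x in (-1 : ℝ)..1, (legendre n x : ℂ) * Complex.exp (-Complex.I * θ * x))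
      = 2 * (-Complex.I) ^ n * (sphericalBessel n θ : ℂ) := by
  simp only [legendre_eq_eval, Complex.ofReal_mul,
    mul_assoc _ (Complex.ofReal (Polynomial.eval _ _)),
    intervalIntegral.integral_const_mul, integral_iterate_derivative_mul_exp n n le_rfl]
  rw [sphericalBessel, Complex.ofReal_mul, iterate_deriv_div_sin_div n hθ.ne']
  have hsign : (Complex.I * θ) ^ n = (-Complex.I) ^ n * (-θ : ℂ) ^ n := by
    rw [← mul_pow, neg_mul_neg]
  have hfac : (n.factorial : ℂ) ≠ 0 := by exact_mod_cast n.factorial_ne_zero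
  rw [hsign]
  push_cast
  field_simp
  ring
end

section
/- For every natural number n, every cutoff frequency ω_c > 0 and every time t > 0, the flat-spectral-density chain coupling satisfies ∫₀^{ω_c} P_n(2ω/ω_c − 1) e^{−iωt} dω = ω_c e^{−i ω_c t / 2} (−i)^n j_n(ω_c t / 2), where P_n is the Legendre polynomial and j_n is the spherical Bessel function of the first kind. -/
open MeasureTheory

open Polynomial in
theorem Polynomial.iteratedDeriv_eval (p : ℝ[X]) (k : ℕ) :
    iteratedDeriv k (fun x => p.eval x) = fun x => (derivative^[k] p).eval x := by
  induction k with
  | zero => simp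
  | succ k ih =>
    rw [iteratedDeriv_succ, ih, Function.iterate_succ_apply']
    ext x
    exact Polynomial.deriv _

open Polynomial in
/-- Derivatives of `(X² - 1)ⁿ` of order below `n` vanish at `±1`. -/
theorem eval_iterate_derivative_sq_sub_one_pow {n k : ℕ} (hk : k < n) {x : ℝ} (hx : x ^ 2 = 1) :
    (derivative^[k] ((X ^ 2 - 1 : ℝ[X]) ^ n)).eval x = 0 := by
  obtain ⟨r, hr⟩ := pow_sub_dvd_iterate_derivative_pow (X ^ 2 - 1 : ℝ[X]) n k
  rw [hr]
  simp [hx, Nat.sub_ne_zero_of_lt hk]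

open Polynomial in
/-- Repeated integration by parts against an exponential, with vanishing boundary terms. -/
theorem integral_iterate_derivative_mul_cexp (n : ℕ) (c : ℂ) {k : ℕ} (hk : k ≤ n) :
    ∫ x in (-1 : ℝ)..1, (((derivative^[k] ((X ^ 2 - 1 : ℝ[X]) ^ n)).eval x : ℝ) : ℂ)
        * Complex.exp (-c * x)
      = c ^ k * ∫ x in (-1 : ℝ)..1, (((x ^ 2 - 1) ^ n : ℝ) : ℂ) * Complex.exp (-c * x) := by
  induction k with
  | zero => simp
  | succ k ih =>
    have hexp (x : ℝ) : HasDerivAt (fun x : ℝ => Complex.exp (-c * x))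
        (-c * Complex.exp (-c * x)) x := by
      have h : HasDerivAt (fun x : ℝ => -c * (x : ℂ)) (-c) x := by
        simpa using (Complex.ofRealCLM.hasDerivAt (x := x)).const_mul (-c)
      simpa [mul_comm] using h.cexp
    have hpoly (x : ℝ) : HasDerivAt
        (fun x : ℝ => (((derivative^[k] ((X ^ 2 - 1 : ℝ[X]) ^ n)).eval x : ℝ) : ℂ))
        (((derivative^[k + 1] ((X ^ 2 - 1 : ℝ[X]) ^ n)).eval x : ℝ) : ℂ) x := by
      rw [Function.iterate_succ_apply']
      exact (Polynomial.hasDerivAt _ x).ofReal_comp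
    have hparts := intervalIntegral.integral_mul_deriv_eq_deriv_mul (a := -1) (b := 1)
      (fun x _ => hpoly x) (fun x _ => hexp x)
      (Continuous.intervalIntegrable (by fun_prop) _ _)
      (Continuous.intervalIntegrable (by fun_prop) _ _)
    rw [eval_iterate_derivative_sq_sub_one_pow (by omega) (by norm_num),
      eval_iterate_derivative_sq_sub_one_pow (by omega) (by norm_num)] at hparts
    have hfactor : ∀ x : ℝ, (((derivative^[k] ((X ^ 2 - 1 : ℝ[X]) ^ n)).eval x : ℝ) : ℂ)
        * (-c * Complex.exp (-c * x)) = -c * ((((derivative^[k] ((X ^ 2 - 1 : ℝ[X]) ^ n)).eval x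
          : ℝ) : ℂ) * Complex.exp (-c * x)) := fun x => by ring
    simp only [hfactor, intervalIntegral.integral_const_mul, ih (by omega)] at hparts
    rw [Complex.ofReal_zero, zero_mul, zero_mul] at hparts
    rw [pow_succ c k]
    linear_combination hparts

/-- The cosine transform of `(x² - 1)ⁿ` on `[-1, 1]`. -/
noncomputable def cosTransform (n : ℕ) (θ : ℝ) : ℝ :=
  ∫ x in (-1 : ℝ)..1, (x ^ 2 - 1) ^ n * Real.cos (θ * x)

theorem integral_mul_cexp_eq_cosTransform (n : ℕ) (θ : ℝ) :
    ∫ x in (-1 : ℝ)..1, (((x ^ 2 - 1) ^ n : ℝ) : ℂ) * Complex.exp (-(Complex.I * θ) * x)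
      = (cosTransform n θ : ℂ) := by
  have hodd : ∫ x in (-1 : ℝ)..1, (x ^ 2 - 1) ^ n * Real.sin (θ * x) = 0 := by
    have h := intervalIntegral.integral_comp_neg (a := -1) (b := 1)
      (fun x : ℝ => (x ^ 2 - 1) ^ n * Real.sin (θ * x))
    simp only [even_two.neg_pow, mul_neg, Real.sin_neg, intervalIntegral.integral_neg,
      neg_neg] at h
    linarith
  have hsplit : ∀ x : ℝ, (((x ^ 2 - 1) ^ n : ℝ) : ℂ) * Complex.exp (-(Complex.I * θ) * x)
      = (((x ^ 2 - 1) ^ n * Real.cos (θ * x) : ℝ) : ℂ)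
        - (((x ^ 2 - 1) ^ n * Real.sin (θ * x) : ℝ) : ℂ) * Complex.I := by
    intro x
    rw [show -(Complex.I * θ) * x = ((-(θ * x) : ℝ) : ℂ) * Complex.I by push_cast; ring,
      Complex.exp_mul_I, ← Complex.ofReal_cos, ← Complex.ofReal_sin, Real.cos_neg, Real.sin_neg]
    push_cast
    ring
  simp only [hsplit]
  rw [intervalIntegral.integral_sub (Continuous.intervalIntegrable (by fun_prop) _ _)
      (Continuous.intervalIntegrable (by fun_prop) _ _),
    intervalIntegral.integral_mul_const, intervalIntegral.integral_ofReal,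
    intervalIntegral.integral_ofReal, hodd]
  simp [cosTransform]

theorem cosTransform_zero {θ : ℝ} (hθ : θ ≠ 0) : cosTransform 0 θ = 2 * (Real.sin θ / θ) := by
  simp [cosTransform, intervalIntegral.integral_comp_mul_left _ hθ]
  ring

theorem hasDerivAt_cosTransform (n : ℕ) (θ : ℝ) :
    HasDerivAt (cosTransform n) (θ / (2 * (n + 1)) * cosTransform (n + 1) θ) θ := by
  have hderiv : HasDerivAt (cosTransform n)
      (∫ x in (-1 : ℝ)..1, (x ^ 2 - 1) ^ n * (-Real.sin (θ * x) * x)) θ := by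
    refine (intervalIntegral.hasDerivAt_integral_of_dominated_loc_of_deriv_le
      (F := fun θ x : ℝ => (x ^ 2 - 1) ^ n * Real.cos (θ * x))
      (F' := fun θ x : ℝ => (x ^ 2 - 1) ^ n * (-Real.sin (θ * x) * x))
      (bound := fun x : ℝ => |(x ^ 2 - 1) ^ n| * |x|)
      Filter.univ_mem (.of_forall fun _ => Continuous.aestronglyMeasurable (by fun_prop))
      (Continuous.intervalIntegrable (by fun_prop) _ _)
      (Continuous.aestronglyMeasurable (by fun_prop)) (.of_forall fun x _ φ _ => ?_)
      (Continuous.intervalIntegrable (by fun_prop) _ _) (.of_forall fun x _ φ _ => ?_)).2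
    · rw [Real.norm_eq_abs, abs_mul, abs_mul, abs_neg]
      gcongr
      exact mul_le_of_le_one_left (abs_nonneg _) (Real.abs_sin_le_one _)
    · have h : HasDerivAt (fun φ : ℝ => φ * x) x φ := by
        simpa using (hasDerivAt_id φ).mul_const x
      exact h.cos.const_mul _
  convert hderiv using 1
  have hpow (x : ℝ) : HasDerivAt (fun x : ℝ => (x ^ 2 - 1) ^ (n + 1))
      ((n + 1) * (x ^ 2 - 1) ^ n * (2 * x)) x := by
    simpa using (((hasDerivAt_id x).fun_pow 2).sub_const 1).fun_pow (n + 1)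
  have hsin (x : ℝ) : HasDerivAt (fun x : ℝ => Real.sin (θ * x)) (Real.cos (θ * x) * θ) x := by
    have h : HasDerivAt (fun x : ℝ => θ * x) θ x := by
      simpa using (hasDerivAt_id x).const_mul θ
    exact h.sin
  have hparts := intervalIntegral.integral_mul_deriv_eq_deriv_mul (a := -1) (b := 1)
    (fun x _ => hpow x) (fun x _ => hsin x)
    (Continuous.intervalIntegrable (by fun_prop) _ _)
    (Continuous.intervalIntegrable (by fun_prop) _ _)
  have hleft : ∀ x : ℝ, (x ^ 2 - 1) ^ (n + 1) * (Real.cos (θ * x) * θ)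
      = θ * ((x ^ 2 - 1) ^ (n + 1) * Real.cos (θ * x)) := fun x => by ring
  have hright : ∀ x : ℝ, (n + 1) * (x ^ 2 - 1) ^ n * (2 * x) * Real.sin (θ * x)
      = (-(2 * (n + 1))) * ((x ^ 2 - 1) ^ n * (-Real.sin (θ * x) * x)) := fun x => by ring
  simp only [hleft, hright, intervalIntegral.integral_const_mul] at hparts
  norm_num at hparts
  rw [cosTransform, div_mul_eq_mul_div, div_eq_iff (by positivity)]
  simp only [neg_mul, mul_neg, intervalIntegral.integral_neg] at hparts ⊢
  linarith

theorem iterate_deriv_div_sinc (n : ℕ) {θ : ℝ} (hθ : 0 < θ) :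
    ((fun f : ℝ → ℝ => fun t : ℝ => deriv f t / t)^[n] (fun t : ℝ => Real.sin t / t)) θ
      = cosTransform n θ / (2 ^ (n + 1) * n.factorial) := by
  induction n generalizing θ with
  | zero => simp [cosTransform_zero hθ.ne']
  | succ n ih =>
    rw [Function.iterate_succ_apply']
    have hev : ((fun f : ℝ → ℝ => fun t : ℝ => deriv f t / t)^[n] (fun t : ℝ => Real.sin t / t))
        =ᶠ[nhds θ] fun θ => cosTransform n θ / (2 ^ (n + 1) * n.factorial) :=
      (lt_mem_nhds hθ).mono fun φ hφ => ih hφ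
    simp only [hev.deriv_eq, ((hasDerivAt_cosTransform n θ).div_const _).deriv,
      Nat.factorial_succ]
    push_cast
    field_simp
    ring

theorem integral_legendre_mul_cexp (n : ℕ) {θ : ℝ} (hθ : 0 < θ) :
    ∫ x in (-1 : ℝ)..1, (legendre n x : ℂ) * Complex.exp (-(Complex.I * θ) * x)
      = 2 * (-Complex.I) ^ n * (sphericalBessel n θ : ℂ) := by
  have hlegendre : ∀ x : ℝ, legendre n x = (1 / ((2 : ℝ) ^ n * n.factorial))
      * (Polynomial.derivative^[n] ((.X ^ 2 - 1 : Polynomial ℝ) ^ n)).eval x := by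
    intro x
    have h := Polynomial.iteratedDeriv_eval ((.X ^ 2 - 1 : Polynomial ℝ) ^ n) n
    simp only [Polynomial.eval_pow, Polynomial.eval_sub, Polynomial.eval_X,
      Polynomial.eval_one] at h
    rw [legendre, h]
  simp only [hlegendre, Complex.ofReal_mul, mul_assoc, intervalIntegral.integral_const_mul]
  simp only [← mul_assoc]
  rw [integral_iterate_derivative_mul_cexp n _ le_rfl, integral_mul_cexp_eq_cosTransform,
    sphericalBessel, iterate_deriv_div_sinc n hθ]
  have hpow : (-Complex.I) ^ n * (-(θ : ℂ)) ^ n = (Complex.I * θ) ^ n := by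
    rw [← mul_pow, neg_mul_neg]
  push_cast
  rw [← hpow]
  have : (n.factorial : ℂ) ≠ 0 := by exact_mod_cast n.factorial_ne_zero
  field_simp
  ring

/-- The flat-spectral-density chain coupling satisfies
`∫₀^{ω_c} P_n(2ω/ω_c − 1) e^{−iωt} dω = ω_c e^{−i ω_c t/2} (−i)^n j_n(ω_c t/2)`. -/
theorem flat_coupling_eq_sphericalBessel (n : ℕ) (ωc t : ℝ) (hωc : 0 < ωc) (ht : 0 < t) :
    (∫ ω in (0 : ℝ)..ωc, (legendre n (2 * ω / ωc - 1) : ℂ) * Complex.exp (-Complex.I * ω * t))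
      = (ωc : ℂ) * Complex.exp (-Complex.I * ωc * t / 2) * (-Complex.I) ^ n
          * (sphericalBessel n (ωc * t / 2) : ℂ) := by
  have hθ : 0 < ωc * t / 2 := by positivity
  have hcne : (ωc : ℂ) ≠ 0 := by exact_mod_cast hωc.ne'
  have hsubst := intervalIntegral.integral_comp_mul_add (a := 0) (b := ωc)
    (fun x : ℝ => (legendre n x : ℂ) * Complex.exp (-(Complex.I * (ωc * t / 2 : ℝ)) * x))
    (c := 2 / ωc) (by positivity) (-1)
  rw [div_mul_cancel₀ _ hωc.ne', mul_zero, zero_add, show (2 : ℝ) + -1 = 1 by norm_num,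
    integral_legendre_mul_cexp n hθ] at hsubst
  have hphase : ∀ ω : ℝ, (legendre n (2 * ω / ωc - 1) : ℂ) * Complex.exp (-Complex.I * ω * t)
      = Complex.exp (-Complex.I * ωc * t / 2) * ((legendre n (2 / ωc * ω + -1) : ℂ)
        * Complex.exp (-(Complex.I * (ωc * t / 2 : ℝ)) * (2 / ωc * ω + -1 : ℝ))) := by
    intro ω
    rw [mul_left_comm, ← Complex.exp_add]
    congr 2
    · ring_nf
    · push_cast
      field_simp
      ring
  simp only [hphase, intervalIntegral.integral_const_mul, hsubst, Complex.real_smul]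
  push_cast
  field_simp
end

section
/- Let h : ℝ → ℂ be continuous and integrable with integrable Fourier transform ĥ(s) = ∫_ℝ h(ω) e^{−iωs} dω. Then for every ω_c > 0, every natural number n and every t ∈ ℝ, ∫₀^{ω_c} P_n(2ω/ω_c − 1) h(ω) e^{−iωt} dω = (1/(2π)) ∫_ℝ ĥ(s) γ_n^M(t − s) ds, where γ_n^M(u) = ∫₀^{ω_c} P_n(2ω/ω_c − 1) e^{−iωu} dω. In other words, the non-Markovian chain coupling coefficient is the convolution of the Fourier transform of the frequency-dependent coupling with the flat-spectral-density coupling coefficient. -/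
open MeasureTheory

theorem continuous_legendre (n : ℕ) : Continuous (legendre n) := by
  have hpow : ContDiff ℝ n (fun y : ℝ => (y ^ 2 - 1) ^ n) := by fun_prop
  exact continuous_const.mul (hpow.continuous_iteratedDeriv n le_rfl)

open FourierTransform in
/-- Fourier inversion in the angular-frequency convention. -/
theorem angular_fourier_inversion {h : ℝ → ℂ} (hcont : Continuous h) (hint : Integrable h)
    (hhat_int : Integrable (fun s : ℝ => ∫ ω : ℝ, h ω * Complex.exp (-Complex.I * ω * s)))
    (ω : ℝ) :
    (1 / (2 * (Real.pi : ℂ))) *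
        ∫ s : ℝ, (∫ ν : ℝ, h ν * Complex.exp (-Complex.I * ν * s)) * Complex.exp (Complex.I * ω * s)
      = h ω := by
  have hpi : (2 * Real.pi) ≠ 0 := by positivity
  have hfourier : 𝓕 h = fun ξ : ℝ =>
      ∫ ν : ℝ, h ν * Complex.exp (-Complex.I * ν * ((2 * Real.pi * ξ : ℝ) : ℂ)) := by
    ext ξ
    rw [Real.fourier_real_eq_integral_exp_smul]
    congr 1 with ν
    rw [smul_eq_mul, mul_comm]
    congr 2
    push_cast
    ring
  have hinv : 𝓕⁻ (𝓕 h) ω = h ω := by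
    rw [hcont.fourierInv_fourier_eq hint]
    rw [hfourier]
    exact hhat_int.comp_mul_left' hpi
  rw [← hinv, Real.fourierInv_eq', hfourier]
  have hscale := Measure.integral_comp_mul_left (fun s : ℝ =>
    (∫ ν : ℝ, h ν * Complex.exp (-Complex.I * ν * s)) * Complex.exp (Complex.I * ω * s))
    (2 * Real.pi)
  rw [abs_of_pos (by positivity), Complex.real_smul] at hscale
  have hconst : (1 / (2 * (Real.pi : ℂ))) = (((2 * Real.pi)⁻¹ : ℝ) : ℂ) := by
    push_cast
    ring
  rw [hconst, ← hscale]
  congr 1 with ξ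
  rw [smul_eq_mul, mul_comm]
  congr 2
  simp only [RCLike.inner_apply, conj_trivial]
  push_cast
  ring

/-- Exchange of a frequency integral over a bounded interval with a time integral against an
integrable weight. -/
theorem integral_mul_intervalIntegral_exp {g : ℝ → ℂ} (hg : Integrable g) {L : ℝ → ℂ}
    (hL : Continuous L) {a b : ℝ} (hab : a ≤ b) (t : ℝ) :
    (∫ s : ℝ, g s * ∫ ω in a..b, L ω * Complex.exp (-Complex.I * ω * (t - s)))
      = ∫ ω in a..b, L ω * Complex.exp (-Complex.I * ω * t) *
          ∫ s : ℝ, g s * Complex.exp (Complex.I * ω * s) := by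
  have hLint : Integrable L (volume.restrict (Set.Ioc a b)) :=
    (hL.integrableOn_Icc (a := a) (b := b)).mono_set Set.Ioc_subset_Icc_self
  have hprod : Integrable (Function.uncurry fun s ω : ℝ =>
      g s * (L ω * Complex.exp (-Complex.I * ω * (t - s))))
      (volume.prod (volume.restrict (Set.Ioc a b))) := by
    have hphase : Continuous fun p : ℝ × ℝ => Complex.exp (-Complex.I * p.2 * (t - p.1)) := by
      fun_prop
    refine ((hg.mul_prod hLint).mul_bdd (c := 1) hphase.aestronglyMeasurable
      (ae_of_all _ fun p => ?_)).congr (ae_of_all _ fun p => ?_)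
    · rw [Complex.norm_exp]
      simp
    · simp only [Function.uncurry]
      ring
  simp only [intervalIntegral.integral_of_le hab, ← integral_const_mul]
  rw [integral_integral_swap hprod]
  congr 1 with ω
  congr 1 with s
  have hexp : Complex.exp (-Complex.I * ω * (t - s))
      = Complex.exp (-Complex.I * ω * t) * Complex.exp (Complex.I * ω * s) := by
    rw [← Complex.exp_add]
    congr 1
    ring
  rw [hexp]
  ring

/-- The non-Markovian chain coupling coefficient is the convolution of the Fourier
transform `ĥ(s) = ∫ h(ω) e^{−iωs} dω` of the frequency-dependent coupling with the
flat-spectral-density coupling `γ_n^M(u) = ∫₀^{ω_c} P_n(2ω/ω_c − 1) e^{−iωu} dω`: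
`∫₀^{ω_c} P_n(2ω/ω_c − 1) h(ω) e^{−iωt} dω = (1/(2π)) ∫ ĥ(s) γ_n^M(t − s) ds`. -/
theorem nonMarkovian_coupling_convolution (h : ℝ → ℂ)
    (hcont : Continuous h) (hint : Integrable h)
    (hhat_int : Integrable (fun s : ℝ => ∫ ω : ℝ, h ω * Complex.exp (-Complex.I * ω * s)))
    (ωc : ℝ) (hωc : 0 < ωc) (n : ℕ) (t : ℝ) :
    (∫ ω in (0 : ℝ)..ωc,
        (legendre n (2 * ω / ωc - 1) : ℂ) * h ω * Complex.exp (-Complex.I * ω * t))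
      = (1 / (2 * (Real.pi : ℂ)))
          * ∫ s : ℝ, (∫ ω : ℝ, h ω * Complex.exp (-Complex.I * ω * s))
              * ∫ ω in (0 : ℝ)..ωc,
                  (legendre n (2 * ω / ωc - 1) : ℂ) * Complex.exp (-Complex.I * ω * (t - s)) := by
  have hL : Continuous fun ω : ℝ => (legendre n (2 * ω / ωc - 1) : ℂ) :=
    Complex.continuous_ofReal.comp ((continuous_legendre n).comp (by fun_prop))
  rw [integral_mul_intervalIntegral_exp hhat_int hL hωc.le,
    ← intervalIntegral.integral_const_mul]
  congr 1 with ω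
  rw [mul_left_comm, angular_fourier_inversion hcont hint hhat_int ω]
  ring
end
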